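/- Let H be a bounded self-adjoint operator on a separable Hilbert space 𝓗 with spectrum contained in [a,b], and let A : [a,b] → B(𝓗) be Hölder continuous in operator norm with Hölder exponent k > 1/2, i.e. ‖A(α₁) − A(α₂)‖ ≤ C|α₁ − α₂|^k for some constant C > 0. Then the Riemann–Stieltjes sums Σ_i A(ξ_i) E_H(Δ_i) over partitions {Δ_i} of [a,b] (with tags ξ_i ∈ Δ_i) converge in operator norm as the mesh of the partition tends to 0; i.e. the spectral integral ∫_a^b A(α) E_H(dα) exists as an operator-norm Riemann–Stieltjes integral. -/

import Mathlib

open MeasureTheory Filter Topology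

noncomputable section

/-- A projection-valued spectral measure for a bounded self-adjoint operator `A`
on a complex Hilbert space: projection-valued, multiplicative, countably additive in
the strong topology, and reproducing `A` via its moment: for every vector `x`,
`re ⟪x, A x⟫ = ∫ t dν_x(t)` where `ν_x(s) = ‖E s x‖²`. -/
structure SpectralMeasure {H : Type*} [NormedAddCommGroup H] [InnerProductSpace ℂ H]
    [CompleteSpace H] (A : H →L[ℂ] H) where
  E : Set ℝ → H →L[ℂ] H
  idem : ∀ s, E s * E s = E s
  selfadj : ∀ s, IsSelfAdjoint (E s)
  empty : E ∅ = 0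
  univ' : E Set.univ = 1
  inter : ∀ s t, E (s ∩ t) = E s * E t
  countably_additive : ∀ f : ℕ → Set ℝ, (∀ n, MeasurableSet (f n)) →
    Pairwise (Function.onFun Disjoint f) → ∀ x : H, HasSum (fun n => E (f n) x) (E (⋃ n, f n) x)
  ν : H → Measure ℝ
  ν_eq : ∀ (x : H) (s : Set ℝ), MeasurableSet s → ν x s = ENNReal.ofReal (‖E s x‖ ^ 2)
  moment : ∀ x : H, (inner ℂ x (A x) : ℂ).re = ∫ t, t ∂(ν x)

/-- `IsRSIntegral F μ a b L` : the operator-norm Riemann–Stieltjes sums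
`Σ_i F(ξ_i) μ((t_i, t_{i+1}])` of the operator-valued function `F` against the
(projection-valued) set function `μ`, over tagged partitions
`a = t_0 < t_1 < ... < t_n = b` with tags `ξ_i ∈ [t_i, t_{i+1}]`, converge in operator
norm to `L` as the mesh tends to `0`. -/
def IsRSIntegral {H : Type*} [NormedAddCommGroup H] [InnerProductSpace ℂ H] [CompleteSpace H]
    (F : ℝ → H →L[ℂ] H) (μ : Set ℝ → H →L[ℂ] H) (a b : ℝ) (L : H →L[ℂ] H) : Prop :=
  ∀ ε > (0 : ℝ), ∃ δ > (0 : ℝ), ∀ (n : ℕ) (t ξ : ℕ → ℝ),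
    0 < n → t 0 = a → t n = b →
    (∀ i < n, t i < t (i + 1) ∧ t (i + 1) - t i < δ ∧ ξ i ∈ Set.Icc (t i) (t (i + 1))) →
    ‖(∑ i ∈ Finset.range n, F (ξ i) * μ (Set.Ioc (t i) (t (i + 1)))) - L‖ < ε

open scoped NNReal

/-!
Increments of a spectral family `P` over disjoint intervals are orthogonal projections, so the
C⋆-identity gives `‖∑ Bᵢ ΔᵢP‖² ≤ ∑ ‖Bᵢ ΔᵢP‖²`: errors on different cells add up in the `ℓ²` sense.
By bisection this yields `‖∑ A(ξᵢ) ΔᵢP - A(η) (P v - P u)‖ ≤ K (v - u) ^ k` for every tagged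
partition of `[u, v]`, where `k > 1/2` makes the recursion for `K` contracting, as two halves cost
only a factor `√2` against the gain `2⁻ᵏ`. Applying the bound in each cell of a partition of mesh
`δ`, its sum differs from the one over a refinement by at most `(∑ K² |Δᵢ| ^ (2k))^(1/2)`, which is
`O(δ ^ (k - 1/2))`. Two partitions are compared through their common refinement.
-/

section OrthogonalSums

variable {R : Type*} [NonUnitalNormedRing R] [StarRing R] [CStarRing R]

theorem norm_add_sq_le_of_mul_star_eq_zero {x y : R} (hxy : x * star y = 0) :
    ‖x + y‖ ^ 2 ≤ ‖x‖ ^ 2 + ‖y‖ ^ 2 := by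
  have hyx : y * star x = 0 := by simpa using congrArg star hxy
  have hself : (x + y) * star (x + y) = x * star x + y * star y := by
    simp [star_add, add_mul, mul_add, hxy, hyx]
  calc ‖x + y‖ ^ 2 = ‖(x + y) * star (x + y)‖ := by rw [CStarRing.norm_self_mul_star, sq]
    _ ≤ ‖x * star x‖ + ‖y * star y‖ := hself ▸ norm_add_le _ _
    _ = ‖x‖ ^ 2 + ‖y‖ ^ 2 := by simp only [CStarRing.norm_self_mul_star, sq]

theorem norm_sum_range_sq_le_of_mul_star_eq_zero {n : ℕ} {x : ℕ → R}
    (hx : ∀ i j, i < j → j < n → x i * star (x j) = 0) :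
    ‖∑ i ∈ Finset.range n, x i‖ ^ 2 ≤ ∑ i ∈ Finset.range n, ‖x i‖ ^ 2 := by
  induction n with
  | zero => simp
  | succ n ih =>
    have horth : (∑ i ∈ Finset.range n, x i) * star (x n) = 0 := by
      rw [Finset.sum_mul]
      exact Finset.sum_eq_zero fun i hi ↦ hx i n (Finset.mem_range.1 hi) n.lt_succ_self
    rw [Finset.sum_range_succ, Finset.sum_range_succ]
    grw [norm_add_sq_le_of_mul_star_eq_zero horth, ih fun i j hij hj ↦ hx i j hij (by lia)]

theorem norm_sum_range_sq_le_split_of_mul_star_eq_zero {i m : ℕ} {x : ℕ → R}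
    (hx : ∀ j l, j < l → l < i + 1 + m → x j * star (x l) = 0) :
    ‖∑ j ∈ Finset.range (i + 1 + m), x j‖ ^ 2 ≤ ‖∑ j ∈ Finset.range i, x j‖ ^ 2 + ‖x i‖ ^ 2 +
      ‖∑ j ∈ Finset.range m, x (i + 1 + j)‖ ^ 2 := by
  have hhead : (∑ j ∈ Finset.range i, x j) * star (x i) = 0 := by
    rw [Finset.sum_mul]
    exact Finset.sum_eq_zero fun j hj ↦ hx j i (Finset.mem_range.1 hj) (by lia)
  have htail : (∑ j ∈ Finset.range (i + 1), x j) *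
      star (∑ j ∈ Finset.range m, x (i + 1 + j)) = 0 := by
    rw [star_sum, Finset.sum_mul_sum]
    refine Finset.sum_eq_zero fun j hj ↦ Finset.sum_eq_zero fun l hl ↦ ?_
    have := Finset.mem_range.1 hj
    have := Finset.mem_range.1 hl
    exact hx j (i + 1 + l) (by lia) (by lia)
  rw [Finset.sum_range_add]
  grw [norm_add_sq_le_of_mul_star_eq_zero htail]
  rw [Finset.sum_range_succ]
  grw [norm_add_sq_le_of_mul_star_eq_zero hhead]

end OrthogonalSums

section TaggedPartitions

/-- `t 0 ≤ t 1 ≤ ⋯ ≤ t n` is a partition of `[u, v]` with tags `ξ i ∈ [t i, t (i + 1)]`.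
Cells may be degenerate, and the values of `t` beyond `n` and of `ξ` from `n` on are irrelevant. -/
structure IsTaggedPartition {ι : Type*} [Preorder ι] (t ξ : ℕ → ι) (n : ℕ) (u v : ι) :
    Prop where
  left_eq : t 0 = u
  right_eq : t n = v
  tag_mem : ∀ i < n, ξ i ∈ Set.Icc (t i) (t (i + 1))

namespace IsTaggedPartition

variable {ι κ : Type*} [Preorder ι] [Preorder κ] {t ξ : ℕ → ι} {n : ℕ} {u v : ι}

theorem le_succ (h : IsTaggedPartition t ξ n u v) {i : ℕ} (hi : i < n) : t i ≤ t (i + 1) :=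
  (h.tag_mem i hi).1.trans (h.tag_mem i hi).2

theorem le_of_le (h : IsTaggedPartition t ξ n u v) {i j : ℕ} (hij : i ≤ j) (hj : j ≤ n) :
    t i ≤ t j :=
  monotoneOn_of_le_add_one (f := t) (s := Set.Iic n) Set.ordConnected_Iic
    (fun _ _ _ hi ↦ h.le_succ (Set.mem_Iic.1 hi))
    (Set.mem_Iic.2 (hij.trans hj)) (Set.mem_Iic.2 hj) hij

theorem mem_Icc (h : IsTaggedPartition t ξ n u v) {i : ℕ} (hi : i ≤ n) : t i ∈ Set.Icc u v :=
  ⟨h.left_eq ▸ h.le_of_le i.zero_le hi, h.right_eq ▸ h.le_of_le hi le_rfl⟩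

theorem Icc_subset (h : IsTaggedPartition t ξ n u v) {i : ℕ} (hi : i < n) :
    Set.Icc (t i) (t (i + 1)) ⊆ Set.Icc u v :=
  Set.Icc_subset_Icc (h.mem_Icc hi.le).1 (h.mem_Icc hi).2

theorem left_le_right (h : IsTaggedPartition t ξ n u v) : u ≤ v :=
  (h.mem_Icc le_rfl).1.trans_eq h.right_eq

theorem take {m : ℕ} (h : IsTaggedPartition t ξ (n + m) u v) :
    IsTaggedPartition t ξ n u (t n) :=
  ⟨h.left_eq, rfl, fun i hi ↦ h.tag_mem i (by lia)⟩

theorem drop {m : ℕ} (h : IsTaggedPartition t ξ (n + m) u v) :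
    IsTaggedPartition (fun i ↦ t (n + i)) (fun i ↦ ξ (n + i)) m (t n) v :=
  ⟨rfl, h.right_eq, fun i hi ↦ h.tag_mem (n + i) (by lia)⟩

theorem rightTagged (h : IsTaggedPartition t ξ n u v) :
    IsTaggedPartition t (fun i ↦ t (i + 1)) n u v :=
  ⟨h.left_eq, h.right_eq, fun _ hi ↦ ⟨h.le_succ hi, le_rfl⟩⟩

theorem map (h : IsTaggedPartition t ξ n u v) {f : ι → κ} (hf : Monotone f) :
    IsTaggedPartition (f ∘ t) (f ∘ ξ) n (f u) (f v) :=
  ⟨congrArg f h.left_eq, congrArg f h.right_eq,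
    fun i hi ↦ ⟨hf (h.tag_mem i hi).1, hf (h.tag_mem i hi).2⟩⟩

end IsTaggedPartition

theorem exists_mem_Icc_succ {ι : Type*} [LinearOrder ι] {t : ℕ → ι} {x : ι} {n : ℕ}
    (hn : n ≠ 0) (h0 : t 0 ≤ x) (hx : x ≤ t n) : ∃ i < n, x ∈ Set.Icc (t i) (t (i + 1)) := by
  induction n with
  | zero => exact absurd rfl hn
  | succ n ih =>
    rcases le_total (t n) x with hle | hle
    · exact ⟨n, n.lt_succ_self, hle, hx⟩
    · rcases eq_or_ne n 0 with rfl | hn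
      · exact ⟨0, one_pos, h0, hx⟩
      · obtain ⟨i, hi, hmem⟩ := ih hn hle
        exact ⟨i, by lia, hmem⟩

theorem exists_isTaggedPartition_mesh_le {a b δ : ℝ} (hab : a ≤ b) (hδ : 0 < δ) :
    ∃ (n : ℕ) (t ξ : ℕ → ℝ), IsTaggedPartition t ξ n a b ∧ ∀ i < n, t (i + 1) - t i ≤ δ := by
  obtain ⟨N, hN⟩ := exists_nat_gt ((b - a) / δ)
  have hN0 : (0 : ℝ) < N := (div_nonneg (sub_nonneg.2 hab) hδ.le).trans_lt hN
  have hstep : 0 ≤ (b - a) / N := div_nonneg (sub_nonneg.2 hab) hN0.le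
  let t : ℕ → ℝ := fun i ↦ a + i * ((b - a) / N)
  have ht (i : ℕ) : t (i + 1) - t i = (b - a) / N := by simp only [t]; push_cast; ring
  refine ⟨N, t, t, ⟨by simp [t], ?_, fun i _ ↦ ⟨le_rfl, by linarith [ht i]⟩⟩, fun i _ ↦ ?_⟩
  · simp only [t]; field_simp; ring
  · rw [ht]; exact (div_lt_comm₀ hδ hN0).1 hN |>.le

theorem sum_rpow_sq_le_of_mesh_le {t ξ : ℕ → ℝ} {n : ℕ} {u v δ k : ℝ}
    (h : IsTaggedPartition t ξ n u v) (hmesh : ∀ i < n, t (i + 1) - t i ≤ δ) (hk : 1 / 2 < k) :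
    ∑ i ∈ Finset.range n, ((t (i + 1) - t i) ^ k) ^ 2 ≤ δ ^ (2 * k - 1) * (v - u) := by
  calc ∑ i ∈ Finset.range n, ((t (i + 1) - t i) ^ k) ^ 2
      ≤ ∑ i ∈ Finset.range n, δ ^ (2 * k - 1) * (t (i + 1) - t i) := by
        refine Finset.sum_le_sum fun i hi ↦ ?_
        have hi := Finset.mem_range.1 hi
        have hcell : 0 ≤ t (i + 1) - t i := sub_nonneg.2 (h.le_succ hi)
        have hsplit : ((t (i + 1) - t i) ^ k) ^ 2 =
            (t (i + 1) - t i) ^ (2 * k - 1) * (t (i + 1) - t i) := by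
          rw [← Real.rpow_mul_natCast hcell, ← Real.rpow_add_one' hcell (by linarith)]
          congr 1
          push_cast
          ring
        rw [hsplit]
        gcongr
        · linarith
        · exact hmesh i hi
    _ = δ ^ (2 * k - 1) * (v - u) := by
        rw [← Finset.mul_sum, Finset.sum_range_sub, h.left_eq, h.right_eq]

end TaggedPartitions

section SpectralFamilies

variable {ι R : Type*}

/-- The Riemann–Stieltjes sum of `A` against the increments of `P`, increments on the right. -/
def rsSum [NonUnitalNonAssocRing R] (A P : ι → R) (t ξ : ℕ → ι) (n : ℕ) : R :=
  ∑ i ∈ Finset.range n, A (ξ i) * (P (t (i + 1)) - P (t i))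

theorem rsSum_sub_const [NonUnitalNonAssocRing R] (A P : ι → R) (c : R) (t ξ : ℕ → ι) (n : ℕ) :
    rsSum (fun s ↦ A s - c) P t ξ n = rsSum A P t ξ n - c * (P (t n) - P (t 0)) := by
  simp only [rsSum, sub_mul]
  rw [Finset.sum_sub_distrib, ← Finset.mul_sum, Finset.sum_range_sub fun i ↦ P (t i)]

variable [LinearOrder ι]

/-- A spectral family: increasing self-adjoint projections `P s`, standing for `E(-∞, s]`.
The multiplication rule with `s = t` says that each `P s` is idempotent. No continuity and no
behaviour at `±∞` is required. -/
structure IsSpectralFamily [Mul R] [Star R] (P : ι → R) : Prop where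
  isSelfAdjoint : ∀ s, IsSelfAdjoint (P s)
  mul_eq : ∀ s t, P s * P t = P (min s t)

/-- The part in `(x, y]` of the Riemann–Stieltjes sum over the partition `t`, for `x ≤ y`. The cells
`(t j, t (j + 1)] ∩ (x, y]` are tagged by their right endpoint; the product of the two increments
vanishes when the intersection is empty. -/
def refinedBlock [NonUnitalNonAssocRing R] (A P : ι → R) (t : ℕ → ι) (n : ℕ) (x y : ι) : R :=
  ∑ j ∈ Finset.range n, A (min y (t (j + 1))) * ((P (t (j + 1)) - P (t j)) * (P y - P x))

/-- The Riemann–Stieltjes sum over the common refinement of the partitions `s` and `t`. -/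
def refinedSum [NonUnitalNonAssocRing R] (A P : ι → R) (s : ℕ → ι) (m : ℕ) (t : ℕ → ι) (n : ℕ) :
    R :=
  ∑ i ∈ Finset.range m, refinedBlock A P t n (s i) (s (i + 1))

namespace IsSpectralFamily

section Algebra

variable [NonUnitalRing R] [StarRing R] {P : ι → R}

theorem commute (hP : IsSpectralFamily P) (s t : ι) : Commute (P s) (P t) := by
  rw [Commute, SemiconjBy, hP.mul_eq, hP.mul_eq, min_comm]

theorem isStarProjection_sub (hP : IsSpectralFamily P) {u v : ι} (huv : u ≤ v) :
    IsStarProjection (P v - P u) where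
  isIdempotentElem := by
    simp [IsIdempotentElem, sub_mul, mul_sub, hP.mul_eq, huv]
  isSelfAdjoint := (hP.isSelfAdjoint v).sub (hP.isSelfAdjoint u)

theorem mul_sub_mul_star_mul_sub_eq_zero (hP : IsSpectralFamily P) {u v x y : ι} (huv : u ≤ v)
    (hvx : v ≤ x) (hxy : x ≤ y) (B C : R) :
    B * (P v - P u) * star (C * (P y - P x)) = 0 := by
  have horth : (P v - P u) * (P y - P x) = 0 := by
    simp [sub_mul, mul_sub, hP.mul_eq, hvx, huv.trans hvx, hvx.trans hxy,
      (huv.trans hvx).trans hxy]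
  rw [star_mul, (hP.isStarProjection_sub hxy).isSelfAdjoint.star_eq, mul_assoc,
    ← mul_assoc _ _ (star C), horth, zero_mul, mul_zero]

theorem mul_increment_mul_star_mul_increment_eq_zero (hP : IsSpectralFamily P)
    {t ξ : ℕ → ι} {n : ℕ} {u v : ι} (ht : IsTaggedPartition t ξ n u v) (B : ℕ → R)
    {i j : ℕ} (hij : i < j) (hj : j < n) :
    B i * (P (t (i + 1)) - P (t i)) * star (B j * (P (t (j + 1)) - P (t j))) = 0 :=
  hP.mul_sub_mul_star_mul_sub_eq_zero (ht.le_succ (hij.trans hj)) (ht.le_of_le hij hj.le)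
    (ht.le_succ hj) _ _

theorem sub_mul_sub_eq_clamp (hP : IsSpectralFamily P) {x y : ι} (hxy : x ≤ y) (p q : ι) :
    (P q - P p) * (P y - P x) = P (max x (min y q)) - P (max x (min y p)) := by
  have hclamp (s : ι) : P s * (P y - P x) = P (max x (min y s)) - P x := by
    rw [mul_sub, hP.mul_eq, hP.mul_eq]
    rcases le_total s x with hs | hs
    · simp [hs, hs.trans hxy]
    · simp [hs, hxy, min_comm]
  rw [sub_mul, hclamp, hclamp, sub_sub_sub_cancel_right]

theorem refinedBlock_eq_rsSum_clamp (hP : IsSpectralFamily P) {t ξ : ℕ → ι} {n : ℕ}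
    {u v x y : ι} (ht : IsTaggedPartition t ξ n u v) (hxy : x ≤ y) (A : ι → R) :
    refinedBlock A P t n x y =
      rsSum A P (fun j ↦ max x (min y (t j))) (fun j ↦ max x (min y (t (j + 1)))) n := by
  refine Finset.sum_congr rfl fun j hj ↦ ?_
  beta_reduce
  rw [hP.sub_mul_sub_eq_clamp hxy]
  rcases le_total x (t (j + 1)) with hx | hx
  · rw [max_eq_right (le_min hxy hx)]
  · have hxj : t j ≤ x := (ht.le_succ (Finset.mem_range.1 hj)).trans hx
    simp [hx, hxj, hx.trans hxy, hxj.trans hxy]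

theorem refinedSum_comm (hP : IsSpectralFamily P) (A : ι → R) (s t : ℕ → ι) (m n : ℕ) :
    refinedSum A P s m t n = refinedSum A P t n s m := by
  have hcomm (u v x y : ι) : Commute (P v - P u) (P y - P x) :=
    ((hP.commute _ _).sub_right (hP.commute _ _)).sub_left
      ((hP.commute _ _).sub_right (hP.commute _ _))
  simp only [refinedSum, refinedBlock]
  rw [Finset.sum_comm]
  simp only [min_comm, (hcomm _ _ _ _).eq]

end Algebra

section Norm

variable [NonUnitalNormedRing R] [StarRing R] [CStarRing R] {P : ι → R}
  {t ξ : ℕ → ι} {n : ℕ} {u v : ι}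

theorem norm_mul_sub_le (hP : IsSpectralFamily P) (huv : u ≤ v) (B : R) :
    ‖B * (P v - P u)‖ ≤ ‖B‖ :=
  (norm_mul_le _ _).trans <|
    mul_le_of_le_one_right (norm_nonneg B) (hP.isStarProjection_sub huv).norm_le

theorem norm_rsSum_sub_const_le_add (hP : IsSpectralFamily P) (ht : IsTaggedPartition t ξ n u v)
    (A : ι → R) (c d : R) :
    ‖rsSum (fun s ↦ A s - c) P t ξ n‖ ≤ ‖rsSum (fun s ↦ A s - d) P t ξ n‖ + ‖d - c‖ := by
  have hchange : rsSum (fun s ↦ A s - c) P t ξ n =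
      rsSum (fun s ↦ A s - d) P t ξ n + (d - c) * (P v - P u) := by
    rw [rsSum_sub_const, rsSum_sub_const, ht.left_eq, ht.right_eq, sub_mul]
    abel
  grw [hchange, norm_add_le, hP.norm_mul_sub_le ht.left_le_right]

end Norm

end IsSpectralFamily

end SpectralFamilies

section HolderEstimates

/-- The constant in the bound `K (v - u) ^ k` for the deviation of a Riemann–Stieltjes sum over
`[u, v]` from its one-cell approximation. It solves `√2 (K 2⁻ᵏ + C) + C = K`, which makes the
bound stable under bisection. -/
def deviationConst (C k : ℝ) : ℝ :=
  (1 + √2) * C / (1 - √2 * (1 / 2) ^ k)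

theorem sqrt_two_mul_half_rpow_lt_one {k : ℝ} (hk : 1 / 2 < k) : √2 * (1 / 2 : ℝ) ^ k < 1 := by
  have hlt : (1 / 2 : ℝ) ^ k < (1 / 2) ^ (1 / 2 : ℝ) :=
    Real.rpow_lt_rpow_of_exponent_gt (by norm_num) (by norm_num) hk
  calc √2 * (1 / 2 : ℝ) ^ k < √2 * (1 / 2) ^ (1 / 2 : ℝ) := by gcongr
    _ = 1 := by rw [← Real.sqrt_eq_rpow, ← Real.sqrt_mul (by norm_num)]; norm_num

theorem deviationConst_nonneg {C k : ℝ} (hC : 0 ≤ C) (hk : 1 / 2 < k) :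
    0 ≤ deviationConst C k :=
  div_nonneg (by positivity) (sub_nonneg.2 (sqrt_two_mul_half_rpow_lt_one hk).le)

theorem deviationConst_bisection {C k : ℝ} (hC : 0 ≤ C) (hk : 1 / 2 < k) :
    2 * (deviationConst C k * (1 / 2) ^ k + C) ^ 2 + C ^ 2 ≤ deviationConst C k ^ 2 := by
  set K := deviationConst C k with hK
  have hne : 1 - √2 * (1 / 2 : ℝ) ^ k ≠ 0 :=
    (sub_pos.2 (sqrt_two_mul_half_rpow_lt_one hk)).ne'
  have hfix : √2 * (K * (1 / 2) ^ k + C) + C = K := by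
    have := div_mul_cancel₀ ((1 + √2) * C) hne
    rw [← deviationConst, ← hK] at this
    linarith
  have hcross : 0 ≤ √2 * (K * (1 / 2) ^ k + C) * C := by
    have := deviationConst_nonneg hC hk
    positivity
  have hsqrt : √2 ^ 2 = 2 := Real.sq_sqrt (by norm_num)
  calc 2 * (K * (1 / 2) ^ k + C) ^ 2 + C ^ 2
      ≤ (√2 * (K * (1 / 2) ^ k + C) + C) ^ 2 := by rw [add_sq (√2 * _), mul_pow, hsqrt]; linarith
    _ = K ^ 2 := by rw [hfix]

theorem norm_sub_le_of_holderOnWith_Icc {R : Type*} [SeminormedAddCommGroup R] {A : ℝ → R}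
    {C k : ℝ≥0} {u v x y : ℝ} (hA : HolderOnWith C k A (Set.Icc u v))
    (hx : x ∈ Set.Icc u v) (hy : y ∈ Set.Icc u v) : ‖A x - A y‖ ≤ C * (v - u) ^ (k : ℝ) :=
  dist_eq_norm (A x) (A y) ▸ hA.dist_le_of_le hx hy (Real.dist_le_of_mem_Icc hx hy)

variable {R : Type*} [NonUnitalNormedRing R] [StarRing R] [CStarRing R] {A P : ℝ → R}
  {C k : ℝ≥0} {t ξ : ℕ → ℝ} {n : ℕ} {u v : ℝ}

theorem IsSpectralFamily.norm_rsSum_sub_const_le_of_half_length (hP : IsSpectralFamily P)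
    (ht : IsTaggedPartition t ξ n u v) {a b K η : ℝ} (hK : 0 ≤ K)
    (hbound : ‖rsSum (fun s ↦ A s - A u) P t ξ n‖ ≤ K * (v - u) ^ (k : ℝ))
    (hA : HolderOnWith C k A (Set.Icc a b)) (hsub : Set.Icc u v ⊆ Set.Icc a b)
    (hlen : v - u ≤ (b - a) * (1 / 2)) (hη : η ∈ Set.Icc a b) :
    ‖rsSum (fun s ↦ A s - A η) P t ξ n‖ ≤
      (K * (1 / 2) ^ (k : ℝ) + C) * (b - a) ^ (k : ℝ) := by
  have huv : 0 ≤ v - u := sub_nonneg.2 ht.left_le_right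
  have hab : 0 ≤ b - a := sub_nonneg.2 (hη.1.trans hη.2)
  have hu : u ∈ Set.Icc a b := hsub ⟨le_rfl, ht.left_le_right⟩
  grw [hP.norm_rsSum_sub_const_le_add ht A (A η) (A u), hbound,
    norm_sub_le_of_holderOnWith_Icc hA hu hη, hlen, Real.mul_rpow hab (by norm_num)]
  exact le_of_eq (by ring)

/-- The cell containing the midpoint cuts the partition into three mutually orthogonal parts: that
cell, and partitions with fewer cells of two intervals of at most half the length. -/
theorem IsSpectralFamily.norm_rsSum_sub_const_le (hP : IsSpectralFamily P)
    (ht : IsTaggedPartition t ξ n u v) (hk : 1 / 2 < (k : ℝ))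
    (hA : HolderOnWith C k A (Set.Icc u v)) {η : ℝ} (hη : η ∈ Set.Icc u v) :
    ‖rsSum (fun s ↦ A s - A η) P t ξ n‖ ≤ deviationConst C k * (v - u) ^ (k : ℝ) := by
  induction n using Nat.strong_induction_on generalizing t ξ u v η with
  | _ n ih =>
  have huv : 0 ≤ v - u := sub_nonneg.2 ht.left_le_right
  have hK := deviationConst_nonneg C.coe_nonneg hk
  rcases eq_or_ne n 0 with rfl | hn
  · simpa [rsSum] using by positivity
  obtain ⟨i, hi, hmid⟩ := exists_mem_Icc_succ (t := t) (x := (u + v) / 2) hn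
    (by linarith [ht.left_eq]) (by linarith [ht.right_eq])
  obtain ⟨m, rfl⟩ : ∃ m, n = i + 1 + m := Nat.exists_eq_add_of_le hi
  have hhead : IsTaggedPartition t ξ i u (t i) := ht.take.take
  have htail := ht.drop
  have hhead_sub : Set.Icc u (t i) ⊆ Set.Icc u v :=
    Set.Icc_subset_Icc_right (ht.mem_Icc hi.le).2
  have htail_sub : Set.Icc (t (i + 1)) v ⊆ Set.Icc u v :=
    Set.Icc_subset_Icc_left (ht.mem_Icc hi).1
  have hhead_le := hP.norm_rsSum_sub_const_le_of_half_length hhead hK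
    (ih i (by lia) hhead (hA.mono hhead_sub) ⟨le_rfl, hhead.left_le_right⟩) hA hhead_sub
    (by linarith [hmid.1]) hη
  have htail_le := hP.norm_rsSum_sub_const_le_of_half_length htail hK
    (ih m (by lia) htail (hA.mono htail_sub) ⟨le_rfl, htail.left_le_right⟩) hA htail_sub
    (by linarith [hmid.2]) hη
  have hcell_le : ‖(A (ξ i) - A η) * (P (t (i + 1)) - P (t i))‖ ≤ C * (v - u) ^ (k : ℝ) :=
    (hP.norm_mul_sub_le (ht.le_succ hi) _).trans <|
      norm_sub_le_of_holderOnWith_Icc hA (ht.Icc_subset hi (ht.tag_mem i hi)) hη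
  refine le_of_sq_le_sq ?_ (by positivity)
  calc ‖rsSum (fun s ↦ A s - A η) P t ξ (i + 1 + m)‖ ^ 2
      ≤ ‖rsSum (fun s ↦ A s - A η) P t ξ i‖ ^ 2 +
          ‖(A (ξ i) - A η) * (P (t (i + 1)) - P (t i))‖ ^ 2 +
          ‖rsSum (fun s ↦ A s - A η) P (fun j ↦ t (i + 1 + j)) (fun j ↦ ξ (i + 1 + j)) m‖ ^ 2 :=
        norm_sum_range_sq_le_split_of_mul_star_eq_zero fun _ _ ↦
          hP.mul_increment_mul_star_mul_increment_eq_zero ht fun j ↦ A (ξ j) - A η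
    _ ≤ (2 * (deviationConst C k * (1 / 2) ^ (k : ℝ) + C) ^ 2 + C ^ 2) *
          ((v - u) ^ (k : ℝ)) ^ 2 := by
        grw [hhead_le, htail_le, hcell_le]
        exact le_of_eq (by ring)
    _ ≤ (deviationConst C k * (v - u) ^ (k : ℝ)) ^ 2 := by
        grw [deviationConst_bisection C.coe_nonneg hk, mul_pow]

theorem IsSpectralFamily.norm_refinedBlock_sub_le (hP : IsSpectralFamily P)
    (ht : IsTaggedPartition t ξ n u v) (hk : 1 / 2 < (k : ℝ))
    (hA : HolderOnWith C k A (Set.Icc u v)) {x y η : ℝ} (hsub : Set.Icc x y ⊆ Set.Icc u v)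
    (hη : η ∈ Set.Icc x y) :
    ‖refinedBlock A P t n x y - A η * (P y - P x)‖ ≤ deviationConst C k * (y - x) ^ (k : ℝ) := by
  have hxy : x ≤ y := hη.1.trans hη.2
  have hclamp : IsTaggedPartition (fun j ↦ max x (min y (t j)))
      (fun j ↦ max x (min y (t (j + 1)))) n x y := by
    have hmono : Monotone fun s ↦ max x (min y s) :=
      monotone_const.max (monotone_const.min monotone_id)
    have := ht.rightTagged.map hmono
    rwa [min_eq_right ((hsub ⟨le_rfl, hxy⟩).1.trans hxy), max_eq_left (hsub ⟨le_rfl, hxy⟩).1,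
      min_eq_left (hsub ⟨hxy, le_rfl⟩).2, max_eq_right hxy] at this
  have hdev := hP.norm_rsSum_sub_const_le hclamp hk (hA.mono hsub) hη
  rwa [rsSum_sub_const, hclamp.left_eq, hclamp.right_eq,
    ← hP.refinedBlock_eq_rsSum_clamp ht hxy] at hdev

theorem IsSpectralFamily.norm_refinedSum_sub_rsSum_sq_le (hP : IsSpectralFamily P)
    {s ζ : ℕ → ℝ} {m : ℕ} {δ : ℝ} (hs : IsTaggedPartition s ζ m u v)
    (hmesh : ∀ i < m, s (i + 1) - s i ≤ δ) (ht : IsTaggedPartition t ξ n u v)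
    (hk : 1 / 2 < (k : ℝ)) (hA : HolderOnWith C k A (Set.Icc u v)) :
    ‖refinedSum A P s m t n - rsSum A P s ζ m‖ ^ 2 ≤
      deviationConst C k ^ 2 * (δ ^ (2 * (k : ℝ) - 1) * (v - u)) := by
  let B : ℕ → R := fun i ↦
    ∑ j ∈ Finset.range n, A (min (s (i + 1)) (t (j + 1))) * (P (t (j + 1)) - P (t j)) - A (ζ i)
  have hB (i : ℕ) : B i * (P (s (i + 1)) - P (s i)) =
      refinedBlock A P t n (s i) (s (i + 1)) - A (ζ i) * (P (s (i + 1)) - P (s i)) := by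
    simp only [B, refinedBlock, sub_mul _ (A (ζ i)), Finset.sum_mul, mul_assoc]
  calc ‖refinedSum A P s m t n - rsSum A P s ζ m‖ ^ 2
      = ‖∑ i ∈ Finset.range m, B i * (P (s (i + 1)) - P (s i))‖ ^ 2 := by
        simp only [hB, refinedSum, rsSum, Finset.sum_sub_distrib]
    _ ≤ ∑ i ∈ Finset.range m, ‖B i * (P (s (i + 1)) - P (s i))‖ ^ 2 :=
        norm_sum_range_sq_le_of_mul_star_eq_zero fun _ _ ↦
          hP.mul_increment_mul_star_mul_increment_eq_zero hs B
    _ ≤ ∑ i ∈ Finset.range m, (deviationConst C k * (s (i + 1) - s i) ^ (k : ℝ)) ^ 2 := by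
        gcongr with i hi
        have hi := Finset.mem_range.1 hi
        rw [hB]
        exact hP.norm_refinedBlock_sub_le ht hk hA (hs.Icc_subset hi) (hs.tag_mem i hi)
    _ ≤ deviationConst C k ^ 2 * (δ ^ (2 * (k : ℝ) - 1) * (v - u)) := by
        simp only [mul_pow, ← Finset.mul_sum]
        grw [sum_rpow_sq_le_of_mesh_le hs hmesh hk]

theorem IsSpectralFamily.norm_rsSum_sub_rsSum_le (hP : IsSpectralFamily P)
    {s ζ : ℕ → ℝ} {m : ℕ} {δ : ℝ} (hs : IsTaggedPartition s ζ m u v)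
    (hs_mesh : ∀ i < m, s (i + 1) - s i ≤ δ) (ht : IsTaggedPartition t ξ n u v)
    (ht_mesh : ∀ i < n, t (i + 1) - t i ≤ δ) (hk : 1 / 2 < (k : ℝ))
    (hA : HolderOnWith C k A (Set.Icc u v)) :
    ‖rsSum A P s ζ m - rsSum A P t ξ n‖ ≤
      2 * √(deviationConst C k ^ 2 * (δ ^ (2 * (k : ℝ) - 1) * (v - u))) := by
  have hleft := Real.le_sqrt_of_sq_le (hP.norm_refinedSum_sub_rsSum_sq_le hs hs_mesh ht hk hA)
  have hright := Real.le_sqrt_of_sq_le (hP.norm_refinedSum_sub_rsSum_sq_le ht ht_mesh hs hk hA)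
  rw [hP.refinedSum_comm] at hright
  rw [norm_sub_rev] at hleft
  linarith [norm_sub_le_norm_sub_add_norm_sub (rsSum A P s ζ m) (refinedSum A P s m t n)
    (rsSum A P t ξ n)]

end HolderEstimates

section RiemannStieltjesIntegral

variable {R : Type*} [NonUnitalNormedRing R] {A P : ℝ → R} {a b : ℝ}

/-- The Riemann–Stieltjes sums of `A` against the increments of `P` over tagged partitions of
`[a, b]` converge to `L` in norm as the mesh tends to `0`. -/
def HasRSIntegral (A P : ℝ → R) (a b : ℝ) (L : R) : Prop :=
  ∀ ε > (0 : ℝ), ∃ δ > (0 : ℝ), ∀ (n : ℕ) (t ξ : ℕ → ℝ), IsTaggedPartition t ξ n a b →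
    (∀ i < n, t (i + 1) - t i ≤ δ) → ‖rsSum A P t ξ n - L‖ < ε

theorem exists_hasRSIntegral_of_cauchy [CompleteSpace R] (hab : a ≤ b)
    (hcauchy : ∀ ε > (0 : ℝ), ∃ δ > (0 : ℝ), ∀ (m : ℕ) (s ζ : ℕ → ℝ) (n : ℕ) (t ξ : ℕ → ℝ),
      IsTaggedPartition s ζ m a b → (∀ i < m, s (i + 1) - s i ≤ δ) →
      IsTaggedPartition t ξ n a b → (∀ i < n, t (i + 1) - t i ≤ δ) →
      ‖rsSum A P s ζ m - rsSum A P t ξ n‖ < ε) :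
    ∃ L, HasRSIntegral A P a b L := by
  choose n t ξ hpart hmesh using fun N : ℕ ↦
    exists_isTaggedPartition_mesh_le hab (Nat.one_div_pos_of_nat (α := ℝ) (n := N))
  have hsmall {δ : ℝ} (hδ : 0 < δ) :
      ∃ N₀, ∀ N ≥ N₀, ∀ i < n N, t N (i + 1) - t N i ≤ δ := by
    obtain ⟨N₀, hN₀⟩ := exists_nat_one_div_lt hδ
    exact ⟨N₀, fun N hN i hi ↦
      (hmesh N i hi).trans ((Nat.one_div_le_one_div hN).trans hN₀.le)⟩
  have hseq : CauchySeq fun N ↦ rsSum A P (t N) (ξ N) (n N) := by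
    refine Metric.cauchySeq_iff.2 fun ε hε ↦ ?_
    obtain ⟨δ, hδ, hclose⟩ := hcauchy ε hε
    obtain ⟨N₀, hN₀⟩ := hsmall hδ
    exact ⟨N₀, fun M hM N hN ↦ dist_eq_norm (_ : R) _ ▸
      hclose _ _ _ _ _ _ (hpart M) (hN₀ M hM) (hpart N) (hN₀ N hN)⟩
  obtain ⟨L, hL⟩ := cauchySeq_tendsto_of_complete hseq
  refine ⟨L, fun ε hε ↦ ?_⟩
  obtain ⟨δ, hδ, hclose⟩ := hcauchy (ε / 2) (half_pos hε)
  obtain ⟨N₀, hN₀⟩ := hsmall hδ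
  refine ⟨δ, hδ, fun m s ζ hs hs_mesh ↦ lt_of_le_of_lt ?_ (half_lt_self hε)⟩
  refine le_of_tendsto (hL.const_sub _).norm ?_
  filter_upwards [eventually_ge_atTop N₀] with N hN
  exact (hclose _ _ _ _ _ _ hs hs_mesh (hpart N) (hN₀ N hN)).le

theorem tendsto_sqrt_mul_rpow_mul_nhdsGT_zero {p : ℝ} (hp : 0 < p) (c d : ℝ) :
    Tendsto (fun δ : ℝ ↦ √(c * (δ ^ p * d))) (𝓝[>] 0) (𝓝 0) := by
  have hcont : Continuous fun δ : ℝ ↦ √(c * (δ ^ p * d)) := by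
    have := Real.continuous_rpow_const hp.le
    fun_prop
  simpa [Real.zero_rpow hp.ne'] using (hcont.tendsto 0).mono_left nhdsWithin_le_nhds

theorem stmt7_general [StarRing R] [CStarRing R] [CompleteSpace R] (hab : a ≤ b)
    (hP : IsSpectralFamily P) {C k : ℝ≥0} (hk : 1 / 2 < (k : ℝ))
    (hA : HolderOnWith C k A (Set.Icc a b)) : ∃ L, HasRSIntegral A P a b L := by
  refine exists_hasRSIntegral_of_cauchy hab fun ε hε ↦ ?_
  have hlim := tendsto_sqrt_mul_rpow_mul_nhdsGT_zero (p := 2 * k - 1) (by linarith)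
    (deviationConst C k ^ 2) (b - a)
  obtain ⟨δ, hδε, hδ⟩ := ((hlim.eventually_lt_const (half_pos hε)).and self_mem_nhdsWithin).exists
  exact ⟨δ, hδ, fun m s ζ n t ξ hs hs_mesh ht ht_mesh ↦
    (hP.norm_rsSum_sub_rsSum_le hs hs_mesh ht ht_mesh hk hA).trans_lt (by linarith)⟩

end RiemannStieltjesIntegral

section SpectralMeasures

theorem holderOnWith_of_dist_le {X Y : Type*} [PseudoMetricSpace X] [PseudoMetricSpace Y]
    {f : X → Y} {C k : ℝ≥0} {s : Set X}
    (hf : ∀ x ∈ s, ∀ y ∈ s, dist (f x) (f y) ≤ C * dist x y ^ (k : ℝ)) :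
    HolderOnWith C k f s := by
  intro x hx y hy
  rw [edist_nndist, edist_nndist, ← ENNReal.coe_rpow_of_nonneg _ k.coe_nonneg, ← ENNReal.coe_mul,
    ENNReal.coe_le_coe, ← NNReal.coe_le_coe]
  simpa using hf x hx y hy

namespace SpectralMeasure

variable {H : Type*} [NormedAddCommGroup H] [InnerProductSpace ℂ H] [CompleteSpace H]
  {H₀ : H →L[ℂ] H}

open scoped Classical in
/-- The `H`-valued measure `s ↦ E(s) x`; as for every `VectorMeasure`, its value on non-measurable
sets is `0`. -/
def vectorMeasure (EH : SpectralMeasure H₀) (x : H) : VectorMeasure ℝ H where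
  measureOf' s := if MeasurableSet s then EH.E s x else 0
  empty' := by simp [EH.empty]
  not_measurable' _ hs := if_neg hs
  m_iUnion' f hf hdisj := by
    simpa [hf, MeasurableSet.iUnion hf] using EH.countably_additive f hf hdisj x

theorem vectorMeasure_apply (EH : SpectralMeasure H₀) (x : H) {s : Set ℝ}
    (hs : MeasurableSet s) : EH.vectorMeasure x s = EH.E s x :=
  if_pos hs

theorem E_Ioc (EH : SpectralMeasure H₀) {u v : ℝ} (huv : u ≤ v) :
    EH.E (Set.Ioc u v) = EH.E (Set.Iic v) - EH.E (Set.Iic u) := by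
  refine eq_sub_of_add_eq' (ContinuousLinearMap.ext fun x ↦ ?_)
  have hadd := VectorMeasure.of_union (v := EH.vectorMeasure x)
    (Set.Iic_disjoint_Ioc (le_refl u)) measurableSet_Iic (measurableSet_Ioc (b := v))
  rw [Set.Iic_union_Ioc_eq_Iic huv] at hadd
  simpa [vectorMeasure_apply, measurableSet_Iic, measurableSet_Ioc] using hadd.symm

theorem isSpectralFamily_E_Iic (EH : SpectralMeasure H₀) :
    IsSpectralFamily fun s ↦ EH.E (Set.Iic s) where
  isSelfAdjoint s := EH.selfadj (Set.Iic s)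
  mul_eq s t := by rw [← EH.inter, Set.Iic_inter_Iic]

theorem isRSIntegral (EH : SpectralMeasure H₀) {A : ℝ → H →L[ℂ] H} {a b : ℝ} {L : H →L[ℂ] H}
    (hL : HasRSIntegral A (fun s ↦ EH.E (Set.Iic s)) a b L) : IsRSIntegral A EH.E a b L := by
  intro ε hε
  obtain ⟨δ, hδ, hclose⟩ := hL ε hε
  refine ⟨δ, hδ, fun n t ξ _ h0 hn hcells ↦ ?_⟩
  have hsum : ∑ i ∈ Finset.range n, A (ξ i) * EH.E (Set.Ioc (t i) (t (i + 1))) =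
      rsSum A (fun s ↦ EH.E (Set.Iic s)) t ξ n :=
    Finset.sum_congr rfl fun i hi ↦ by rw [EH.E_Ioc (hcells i (Finset.mem_range.1 hi)).1.le]
  rw [hsum]
  exact hclose n t ξ ⟨h0, hn, fun i hi ↦ (hcells i hi).2.2⟩ fun i hi ↦ (hcells i hi).2.1.le

end SpectralMeasure

end SpectralMeasures

/-- If `H₀` is a bounded self-adjoint operator with spectrum in `[a,b]`
and `A : [a,b] → B(𝓗)` is operator-norm Hölder continuous with exponent `k > 1/2`, then
the spectral integral `∫_a^b A(α) E_{H₀}(dα)` exists as an operator-norm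
Riemann–Stieltjes integral. -/
theorem stmt7 {H : Type*} [NormedAddCommGroup H] [InnerProductSpace ℂ H] [CompleteSpace H]
    [TopologicalSpace.SeparableSpace H]
    (a b : ℝ) (hab : a ≤ b)
    (H₀ : H →L[ℂ] H) (hH₀ : IsSelfAdjoint H₀)
    (EH : SpectralMeasure H₀) (hspec : EH.E (Set.Icc a b) = 1)
    (A : ℝ → H →L[ℂ] H) (C k : ℝ) (hC : 0 < C) (hk : 1 / 2 < k)
    (hHolder : ∀ α₁ ∈ Set.Icc a b, ∀ α₂ ∈ Set.Icc a b,
      ‖A α₁ - A α₂‖ ≤ C * |α₁ - α₂| ^ k) :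
    ∃ L : H →L[ℂ] H, IsRSIntegral A EH.E a b L := by
  lift C to ℝ≥0 using hC.le
  lift k to ℝ≥0 using by linarith
  have hA : HolderOnWith C k A (Set.Icc a b) :=
    holderOnWith_of_dist_le (by simpa only [dist_eq_norm, Real.norm_eq_abs] using hHolder)
  obtain ⟨L, hL⟩ := stmt7_general hab EH.isSpectralFamily_E_Iic hk hA
  exact ⟨L, EH.isRSIntegral hL⟩

end
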